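/- arXiv:2308.13740 — 2 statements merged into one kernel-verified Lean document; each statement's English description precedes it below -/
import Mathlib

section
/- Let (X₁,…,Xₙ) be a centered Gaussian random vector in ℝⁿ with correlation coefficients ρ_{1i} between X₁ and X_i, and suppose each X_i has positive variance. Then for every α₁ ∈ (0,1), E[|X₁|^{-α₁} ∏_{i=2}^n X_i²] ≥ (∏_{i=2}^n (1-ρ_{1i}²)) · E[|X₁|^{-α₁}] · ∏_{i=2}^n E[X_i²]. -/
open MeasureTheory Matrix

/-!
Regress `X₂, …, Xₙ` linearly on `X₁`. The residuals are independent of `X₁`, and the residual of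
`Xᵢ` has variance `(1 - ρ₁ᵢ²) Var Xᵢ`. Thus, conditionally on `X₁`, the other coordinates form a
Gaussian vector with these variances and with some means depending on `X₁`, and it suffices to
prove `∏ Var Yᵢ ≤ E[∏ (Yᵢ + cᵢ)²]` for Gaussian vectors `Y` and constants `c`: multiplying by
`|X₁| ^ (-α₁)` and integrating gives the theorem.

To this end let `W` be the Wick product of the centered `Yᵢ`. By Stein's identity `W` is orthogonal
to all polynomials of lower degree in `Y`, in particular to `∏ (Yᵢ + cᵢ) - W`, so the mean square of
`∏ (Yᵢ + cᵢ)` is at least that of `W`. Stein's identity also shows that adjoining a factor `Yⱼ` to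
the Wick product multiplies its mean square by `Var Yⱼ` and adds a square.
-/

namespace GaussianProduct

open ProbabilityTheory

section Wick

variable {ι k R : Type*} [CommRing k] [CommRing R] [Algebra k R] (D : ι → Derivation k R R)

/-- The elements of degree less than `n` with respect to the derivations `D`: those that vanish
under every composition of `n` of the `D i`. It replaces the degree of polynomials, so that the
`D i` may be directional derivatives in an arbitrary algebra. -/
def degreeLT : ℕ → Submodule k R
  | 0 => ⊥
  | n + 1 => ⨅ i, (degreeLT n).comap (D i : R →ₗ[k] R)

/-- The Wick product `:y j₁ ⋯ y jₙ:` of a list of elements: multiplication by `y j` followed by the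
correction `- D j`, which is the adjoint of `D j` when `D` and `y` satisfy Stein's identity. -/
def wickProduct (y : ι → R) : List ι → R
  | [] => 1
  | j :: l => y j * wickProduct y l - D j (wickProduct y l)

variable {D} {y m : ι → R} {n : ℕ} {a p : R}

lemma mem_degreeLT_succ : p ∈ degreeLT D (n + 1) ↔ ∀ i, D i p ∈ degreeLT D n := by
  simp [degreeLT]

lemma degreeLT_le_succ (n : ℕ) : degreeLT D n ≤ degreeLT D (n + 1) := by
  induction n with
  | zero => exact bot_le
  | succ n ih => exact fun p hp ↦ mem_degreeLT_succ.2 fun i ↦ ih (mem_degreeLT_succ.1 hp i)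

lemma mul_mem_degreeLT (ha : ∀ i, D i a = 0) (hp : p ∈ degreeLT D n) :
    a * p ∈ degreeLT D n := by
  induction n generalizing p with
  | zero => simp_all [degreeLT]
  | succ n ih =>
    refine mem_degreeLT_succ.2 fun i ↦ ?_
    simpa [Derivation.leibniz, ha] using ih (mem_degreeLT_succ.1 hp i)

lemma mul_mem_degreeLT_succ (ha : ∀ i j, D j (D i a) = 0) (hp : p ∈ degreeLT D n) :
    a * p ∈ degreeLT D (n + 1) := by
  induction n generalizing p with
  | zero => simp_all [degreeLT]
  | succ n ih =>
    refine mem_degreeLT_succ.2 fun i ↦ ?_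
    rw [Derivation.leibniz, smul_eq_mul, smul_eq_mul, mul_comm p]
    exact add_mem (ih (mem_degreeLT_succ.1 hp i)) (mul_mem_degreeLT (ha i) hp)

lemma prod_add_mem_degreeLT (hy : ∀ i j j', D i (D j' (y j)) = 0) (hm : ∀ i j, D i (m j) = 0)
    (l : List ι) : (l.map fun j ↦ y j + m j).prod ∈ degreeLT D (l.length + 1) := by
  induction l with
  | nil => simp [mem_degreeLT_succ]
  | cons j l ih =>
    rw [List.map_cons, List.prod_cons, List.length_cons, add_mul]
    exact add_mem (mul_mem_degreeLT_succ (fun i i' ↦ hy i' j i) ih)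
      (degreeLT_le_succ _ (mul_mem_degreeLT (hm · j) ih))

lemma prod_add_sub_wickProduct_mem_degreeLT (hy : ∀ i j j', D i (D j' (y j)) = 0)
    (hm : ∀ i j, D i (m j) = 0) (l : List ι) :
    (l.map fun j ↦ y j + m j).prod - wickProduct D y l ∈ degreeLT D l.length := by
  induction l with
  | nil => simp [degreeLT, wickProduct]
  | cons j l ih =>
    set F := (l.map fun j ↦ y j + m j).prod
    set W := wickProduct D y l
    have hF : F ∈ degreeLT D (l.length + 1) := prod_add_mem_degreeLT hy hm l
    have hW : W ∈ degreeLT D (l.length + 1) :=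
      ((degreeLT D _).sub_mem_iff_right hF).1 (degreeLT_le_succ _ ih)
    have expand : ((j :: l).map fun j ↦ y j + m j).prod - wickProduct D y (j :: l) =
        y j * (F - W) + m j * F + D j W := by
      simp only [List.map_cons, List.prod_cons, wickProduct, F, W]
      ring
    rw [expand, List.length_cons]
    exact add_mem (add_mem (mul_mem_degreeLT_succ (fun i i' ↦ hy i' j i) ih)
      (mul_mem_degreeLT (hm · j) hF)) (degreeLT_le_succ _ (mem_degreeLT_succ.1 hW j))

section Stein

variable {L : R →ₗ[k] k} (hL : ∀ j p, L (y j * p) = L (D j p))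
include hL

lemma stein_adjoint (j : ι) (p q : R) : L (q * (y j * p - D j p)) = L (D j q * p) := by
  have h := hL j (q * p)
  rw [Derivation.leibniz, smul_eq_mul, smul_eq_mul, map_add] at h
  rw [mul_sub, mul_left_comm, map_sub, h, mul_comm p, add_sub_cancel_left]

lemma stein_mul_wickProduct_eq_zero (l : List ι) {q : R} (hq : q ∈ degreeLT D l.length) :
    L (q * wickProduct D y l) = 0 := by
  induction l generalizing q with
  | nil => simp_all [degreeLT]
  | cons j l ih =>
    rw [wickProduct, stein_adjoint hL]
    exact ih (mem_degreeLT_succ.1 hq j)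

lemma stein_wickProduct_cons_sq {t : k} {j : ι} (ht : D j (y j) = algebraMap k R t) (l : List ι) :
    L (wickProduct D y (j :: l) ^ 2) =
      t * L (wickProduct D y l ^ 2) + L (D j (wickProduct D y l) ^ 2) := by
  set W := wickProduct D y l
  have commute : D j (y j * W - D j W) * W = t • W ^ 2 + W * (y j * D j W - D j (D j W)) := by
    rw [map_sub, Derivation.leibniz, ht, smul_eq_mul, smul_eq_mul, Algebra.smul_def]
    ring
  rw [sq, wickProduct, stein_adjoint hL, commute, map_add, stein_adjoint hL, map_smul,
    smul_eq_mul, ← sq]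

variable [LinearOrder k] [IsStrictOrderedRing k] (hpos : ∀ p, 0 ≤ L (p ^ 2))
include hpos

lemma prod_mul_stein_one_le_wickProduct_sq {t : ι → k}
    (ht : ∀ j, D j (y j) = algebraMap k R (t j)) (ht₀ : ∀ j, 0 ≤ t j) (l : List ι) :
    (l.map t).prod * L 1 ≤ L (wickProduct D y l ^ 2) := by
  induction l with
  | nil => simp [wickProduct]
  | cons j l ih =>
    calc ((j :: l).map t).prod * L 1 = t j * ((l.map t).prod * L 1) := by
          rw [List.map_cons, List.prod_cons, mul_assoc]
      _ ≤ t j * L (wickProduct D y l ^ 2) := mul_le_mul_of_nonneg_left ih (ht₀ j)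
      _ ≤ L (wickProduct D y (j :: l) ^ 2) := by
          rw [stein_wickProduct_cons_sq hL (ht j)]
          exact le_add_of_nonneg_right (hpos _)

theorem prod_mul_stein_one_le_prod_add_sq {t : ι → ι → k}
    (ht : ∀ i j, D i (y j) = algebraMap k R (t i j)) (ht₀ : ∀ j, 0 ≤ t j j)
    (hm : ∀ i j, D i (m j) = 0) (l : List ι) :
    (l.map fun j ↦ t j j).prod * L 1 ≤ L ((l.map fun j ↦ y j + m j).prod ^ 2) := by
  set F := (l.map fun j ↦ y j + m j).prod
  set W := wickProduct D y l
  have orthogonal : L ((F - W) * W) = 0 :=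
    stein_mul_wickProduct_eq_zero hL l
      (prod_add_sub_wickProduct_mem_degreeLT (fun i j j' ↦ by rw [ht, Derivation.map_algebraMap])
        hm l)
  calc (l.map fun j ↦ t j j).prod * L 1 ≤ L (W ^ 2) :=
        prod_mul_stein_one_le_wickProduct_sq hL hpos (fun j ↦ ht j j) ht₀ l
    _ ≤ L ((F - W) ^ 2) + L (W ^ 2) := le_add_of_nonneg_left (hpos _)
    _ = L ((F - W) ^ 2 + (F - W) * W + (F - W) * W + W ^ 2) := by simp [orthogonal]
    _ = L (F ^ 2) := by congr 1; ring

end Stein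

end Wick

section GaussianReal

lemma hasDerivAt_gaussianPDFReal {v : NNReal} (hv : v ≠ 0) (m x : ℝ) :
    HasDerivAt (gaussianPDFReal m v) (-((x - m) / v) * gaussianPDFReal m v x) x := by
  have hv' : (v : ℝ) ≠ 0 := mod_cast hv
  have exponent : HasDerivAt (fun x : ℝ ↦ -(x - m) ^ 2 / (2 * v)) (-((x - m) / v)) x := by
    refine ((((hasDerivAt_id x).sub_const m).pow 2).neg.div_const (2 * (v : ℝ))).congr_deriv ?_
    simp only [id_eq]
    field_simp
    ring
  refine (exponent.exp.const_mul (√(2 * Real.pi * v))⁻¹).congr_deriv ?_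
  rw [gaussianPDFReal]
  ring

lemma integrable_gaussianReal_iff {v : NNReal} (hv : v ≠ 0) {m : ℝ} {f : ℝ → ℝ} :
    Integrable f (gaussianReal m v) ↔ Integrable fun x ↦ gaussianPDFReal m v x * f x := by
  rw [gaussianReal_of_var_ne_zero m hv, integrable_withDensity_iff_integrable_smul'
    (measurable_gaussianPDF m v) (ae_of_all _ fun _ ↦ gaussianPDF_lt_top)]
  simp only [toReal_gaussianPDF, smul_eq_mul]

theorem integral_sub_mul_gaussianReal {m : ℝ} {v : NNReal} {f f' : ℝ → ℝ}
    (hf : ∀ x, HasDerivAt f (f' x) x) (hfi : Integrable f (gaussianReal m v))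
    (hf'i : Integrable f' (gaussianReal m v))
    (hmul : Integrable (fun x ↦ (x - m) * f x) (gaussianReal m v)) :
    ∫ x, (x - m) * f x ∂gaussianReal m v = v * ∫ x, f' x ∂gaussianReal m v := by
  rcases eq_or_ne v 0 with rfl | hv
  · simp
  have hv' : (v : ℝ) ≠ 0 := mod_cast hv
  rw [integrable_gaussianReal_iff hv] at hfi hf'i hmul
  set φ := gaussianPDFReal m v with hφ
  have total : ∫ x, (φ x * f' x - (v : ℝ)⁻¹ * (φ x * ((x - m) * f x))) = 0 := by
    refine integral_eq_zero_of_hasDerivAt_of_integrable (fun x ↦ ?_)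
      (hf'i.sub (hmul.const_mul (v : ℝ)⁻¹)) hfi
    refine ((hasDerivAt_gaussianPDFReal hv m x).mul (hf x)).congr_deriv ?_
    ring
  rw [integral_sub hf'i (hmul.const_mul _), integral_const_mul, sub_eq_zero] at total
  simp only [integral_gaussianReal_eq_integral_smul hv, smul_eq_mul, ← hφ, total,
    mul_inv_cancel_left₀ hv']

end GaussianReal

section Polynomial

open MvPolynomial (C eval mkDerivation)

variable {Ω ι : Type*} [MeasurableSpace Ω] {μ : Measure Ω}

lemma memLp_eval [IsFiniteMeasure μ] {Y : ι → Ω → ℝ}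
    (hY : ∀ i, ∀ q : NNReal, MemLp (Y i) q μ) (p : MvPolynomial ι ℝ) (q : NNReal) :
    MemLp (fun ω ↦ eval (Y · ω) p) q μ := by
  induction p using MvPolynomial.induction_on generalizing q with
  | C a => simpa using memLp_const a
  | add p₁ p₂ h₁ h₂ => simp only [map_add]; exact (h₁ q).add (h₂ q)
  | mul_X p i h =>
    have holder : ENNReal.HolderTriple (2 * q : NNReal) (2 * q : NNReal) q := by
      constructor
      rw [ENNReal.coe_mul, ENNReal.coe_ofNat, ENNReal.mul_inv (by simp) (by simp), ← add_mul,
        ENNReal.inv_two_add_inv_two, one_mul]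
    simpa using MemLp.mul' (hY i (2 * q)) (h (2 * q))

lemma memLp_eval_of_hasGaussianLaw {Y : ι → Ω → ℝ}
    (h : HasGaussianLaw (fun ω ↦ (Y · ω)) μ) (p : MvPolynomial ι ℝ) (q : NNReal) :
    MemLp (fun ω ↦ eval (Y · ω) p) q μ := by
  have := h.isProbabilityMeasure
  exact memLp_eval (fun i _ ↦ (h.eval i).memLp ENNReal.coe_ne_top) p q

lemma mkDerivation_C_mul (a : ℝ) (b : ι → ℝ) (p : MvPolynomial ι ℝ) :
    mkDerivation ℝ (fun i ↦ (C (a * b i) : MvPolynomial ι ℝ)) p =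
      a • mkDerivation ℝ (fun i ↦ (C (b i) : MvPolynomial ι ℝ)) p := by
  have scale : mkDerivation ℝ (fun i ↦ (C (a * b i) : MvPolynomial ι ℝ)) =
      a • mkDerivation ℝ (fun i ↦ (C (b i) : MvPolynomial ι ℝ)) :=
    MvPolynomial.derivation_ext fun i ↦ by simp [MvPolynomial.smul_eq_C_mul]
  rw [scale, Derivation.smul_apply]

lemma hasDerivAt_eval_line (r b : ι → ℝ) (p : MvPolynomial ι ℝ) (x : ℝ) :
    HasDerivAt (fun x ↦ eval (fun i ↦ r i + b i * x) p)
      (eval (fun i ↦ r i + b i * x) (mkDerivation ℝ (fun i ↦ C (b i)) p)) x := by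
  induction p using MvPolynomial.induction_on with
  | C a => simpa using hasDerivAt_const x a
  | add p₁ p₂ h₁ h₂ => simpa using h₁.fun_add h₂
  | mul_X p i h =>
    have hX : HasDerivAt (fun x ↦ r i + b i * x) (b i) x := by
      simpa using ((hasDerivAt_id x).const_mul (b i)).const_add (r i)
    simpa [Derivation.leibniz, mul_comm, add_comm] using h.fun_mul hX

end Polynomial

section Regression

variable {Ω ι : Type*} [MeasurableSpace Ω] {μ : Measure Ω} {Z : Ω → ℝ}

/-- The slope of the linear regression of `Y` on `Z`. When `Z` is almost surely constant the
division by zero gives the slope `0`, which is as good as any other. -/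
noncomputable def regressionCoeff (Z Y : Ω → ℝ) (μ : Measure Ω) : ℝ := cov[Z, Y; μ] / Var[Z; μ]

/-- The residual of the linear regression of `Y` on `Z`, the part of `Y` not explained by `Z`. The
intercept is not subtracted, so the residual has mean `μ[Y] - regressionCoeff Z Y μ * μ[Z]`. -/
noncomputable def regressionResidual (Z Y : Ω → ℝ) (μ : Measure Ω) : Ω → ℝ :=
  Y - regressionCoeff Z Y μ • Z

lemma regressionCoeff_mul_variance [IsFiniteMeasure μ] (hZ : MemLp Z 2 μ) (Y : Ω → ℝ) :
    regressionCoeff Z Y μ * Var[Z; μ] = cov[Z, Y; μ] := by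
  rcases eq_or_ne Var[Z; μ] 0 with hvar | hvar
  · have centered : (fun ω ↦ (Z ω - μ[Z]) * (Y ω - μ[Y])) =ᵐ[μ] 0 := by
      filter_upwards [ae_eq_integral_of_variance_eq_zero hZ hvar] with ω hω
      simp [hω]
    rw [hvar, mul_zero, covariance, integral_eq_zero_of_ae centered]
  · rw [regressionCoeff, div_mul_cancel₀ _ hvar]

lemma covariance_regressionResidual [IsFiniteMeasure μ] {Y : Ω → ℝ} (hZ : MemLp Z 2 μ)
    (hY : MemLp Y 2 μ) : cov[Z, regressionResidual Z Y μ; μ] = 0 := by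
  rw [regressionResidual, covariance_sub_right hZ hY (hZ.const_smul _),
    covariance_smul_right, covariance_self hZ.aemeasurable, regressionCoeff_mul_variance hZ,
    sub_self]

lemma variance_regressionResidual [IsFiniteMeasure μ] {Y : Ω → ℝ} (hZ : MemLp Z 2 μ)
    (hY : MemLp Y 2 μ) :
    Var[regressionResidual Z Y μ; μ] = Var[Y; μ] - cov[Z, Y; μ] ^ 2 / Var[Z; μ] := by
  rw [regressionResidual, variance_sub hY (hZ.const_smul _), covariance_smul_right,
    variance_smul, covariance_comm, sq (regressionCoeff Z Y μ), mul_assoc,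
    regressionCoeff_mul_variance hZ, regressionCoeff]
  ring

lemma one_sub_correlation_sq_mul_variance [IsFiniteMeasure μ] {Y : Ω → ℝ} (hZ : MemLp Z 2 μ)
    (hY : MemLp Y 2 μ) (hvar : Var[Y; μ] ≠ 0) :
    (1 - (cov[Z, Y; μ] / (√Var[Z; μ] * √Var[Y; μ])) ^ 2) * Var[Y; μ] =
      Var[regressionResidual Z Y μ; μ] := by
  rw [variance_regressionResidual hZ hY, div_pow, mul_pow, Real.sq_sqrt (variance_nonneg _ _),
    Real.sq_sqrt (variance_nonneg _ _), sub_mul, one_mul, ← div_div, div_mul_cancel₀ _ hvar]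

lemma identDistrib_prodMk_of_indepFun [IsProbabilityMeasure μ] {E F : Type*} [MeasurableSpace E]
    [MeasurableSpace F] {X : Ω → E} {Y : Ω → F} (hX : AEMeasurable X μ) (hY : AEMeasurable Y μ)
    (h : X ⟂ᵢ[μ] Y) :
    IdentDistrib (fun ω ↦ (X ω, Y ω)) (fun q : Ω × Ω ↦ (X q.1, Y q.2)) μ (μ.prod μ) := by
  have law_X : HasLaw X (μ.map X) μ := ⟨hX, rfl⟩
  have law_Y : HasLaw Y (μ.map Y) μ := ⟨hY, rfl⟩
  exact (law_X.identDistrib (law_X.fun_comp measurePreserving_fst.hasLaw)).prodMk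
    (law_Y.identDistrib (law_Y.fun_comp measurePreserving_snd.hasLaw)) h (indepFun_prod₀ hX hY)

variable [Finite ι] {Y : ι → Ω → ℝ}

lemma hasGaussianLaw_regressionResidual (h : HasGaussianLaw (fun ω ↦ (Z ω, (Y · ω))) μ) :
    HasGaussianLaw (fun ω ↦ (Z ω, fun i ↦ regressionResidual Z (Y i) μ ω)) μ :=
  have := Fintype.ofFinite ι
  h.map_fun <| (ContinuousLinearMap.fst ℝ ℝ (ι → ℝ)).prod <| ContinuousLinearMap.pi fun i ↦
    ContinuousLinearMap.proj i ∘L ContinuousLinearMap.snd ℝ ℝ (ι → ℝ) -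
      regressionCoeff Z (Y i) μ • ContinuousLinearMap.fst ℝ ℝ (ι → ℝ)

lemma indepFun_regressionResidual (h : HasGaussianLaw (fun ω ↦ (Z ω, (Y · ω))) μ) :
    Z ⟂ᵢ[μ] fun ω i ↦ regressionResidual Z (Y i) μ ω := by
  have := Fintype.ofFinite ι
  have := h.isProbabilityMeasure
  have gaussian := (hasGaussianLaw_regressionResidual h).map_fun
    ((ContinuousLinearMap.pi fun _ : Unit ↦ ContinuousLinearMap.id ℝ ℝ).prodMap
      (ContinuousLinearMap.id ℝ (ι → ℝ)))
  exact (gaussian.indepFun_of_covariance_eval (X := fun _ ↦ Z) fun _ i ↦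
    covariance_regressionResidual h.fst.memLp_two (h.snd.eval i).memLp_two).comp
      (measurable_pi_apply ()) measurable_id

/-- The value of `Y` at `ω'` after resampling the regressor `Z` at `ω`. -/
noncomputable def regressionResample (Z : Ω → ℝ) (Y : ι → Ω → ℝ) (μ : Measure Ω) (ω ω' : Ω) :
    ι → ℝ :=
  fun i ↦ regressionResidual Z (Y i) μ ω' + regressionCoeff Z (Y i) μ * Z ω

theorem identDistrib_regression (h : HasGaussianLaw (fun ω ↦ (Z ω, (Y · ω))) μ) :
    IdentDistrib (fun ω ↦ (Z ω, (Y · ω)))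
      (fun q : Ω × Ω ↦ (Z q.1, regressionResample Z Y μ q.1 q.2)) μ (μ.prod μ) := by
  have := Fintype.ofFinite ι
  have := h.isProbabilityMeasure
  let recombine : ℝ × (ι → ℝ) → ℝ × (ι → ℝ) :=
    fun p ↦ (p.1, fun i ↦ p.2 i + regressionCoeff Z (Y i) μ * p.1)
  have law := (identDistrib_prodMk_of_indepFun h.fst.aemeasurable
    (hasGaussianLaw_regressionResidual h).snd.aemeasurable
    (indepFun_regressionResidual h)).comp (u := recombine) (by fun_prop)
  unfold regressionResample
  simpa [recombine, regressionResidual, Function.comp_def] using law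

lemma integral_regression (h : HasGaussianLaw (fun ω ↦ (Z ω, (Y · ω))) μ)
    {f : ℝ × (ι → ℝ) → ℝ} (hf : Measurable f)
    (hint : Integrable (fun ω ↦ f (Z ω, (Y · ω))) μ) :
    ∫ ω, f (Z ω, (Y · ω)) ∂μ = ∫ ω', ∫ ω, f (Z ω, regressionResample Z Y μ ω ω') ∂μ ∂μ := by
  have := h.isProbabilityMeasure
  have law := (identDistrib_regression h).comp hf
  exact law.integral_eq.trans (integral_prod_symm _ (law.integrable_snd hint))

end Regression

section Stein

open MvPolynomial (C eval mkDerivation)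

variable {Ω ι : Type*} [MeasurableSpace Ω] {μ : Measure Ω} {Z : Ω → ℝ}

lemma integral_sub_mul_eval_line (hZ : HasGaussianLaw Z μ) (r b : ι → ℝ) (p : MvPolynomial ι ℝ) :
    ∫ ω, (Z ω - μ[Z]) * eval (fun i ↦ r i + b i * Z ω) p ∂μ =
      Var[Z; μ] * ∫ ω, eval (fun i ↦ r i + b i * Z ω) (mkDerivation ℝ (fun i ↦ C (b i)) p) ∂μ := by
  have law : HasLaw Z (gaussianReal μ[Z] Var[Z; μ].toNNReal) μ :=
    ⟨hZ.aemeasurable, hZ.map_eq_gaussianReal⟩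
  set m := μ[Z]
  set ν := gaussianReal m Var[Z; μ].toNNReal
  have eval_memLp (p : MvPolynomial ι ℝ) : MemLp (fun x ↦ eval (fun i ↦ r i + b i * x) p) 2 ν :=
    memLp_eval (fun i q ↦ (memLp_const (r i)).add ((memLp_id_gaussianReal q).const_mul (b i))) p 2
  have centered_memLp : MemLp (fun x ↦ x - m) 2 ν :=
    (memLp_id_gaussianReal 2).sub (memLp_const m)
  have mul_integrable := centered_memLp.integrable_mul (eval_memLp p)
  have stein := integral_sub_mul_gaussianReal (hasDerivAt_eval_line r b p)
    ((eval_memLp p).integrable one_le_two) ((eval_memLp _).integrable one_le_two) mul_integrable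
  rw [Real.coe_toNNReal _ (variance_nonneg Z μ)] at stein
  exact (law.integral_comp mul_integrable.1).trans
    (stein.trans (congrArg _ (law.integral_comp (eval_memLp _).1).symm))

theorem integral_sub_mul_eval [Finite ι] {Y : ι → Ω → ℝ}
    (h : HasGaussianLaw (fun ω ↦ (Z ω, (Y · ω))) μ) (p : MvPolynomial ι ℝ) :
    ∫ ω, (Z ω - μ[Z]) * eval (Y · ω) p ∂μ =
      ∫ ω, eval (Y · ω) (mkDerivation ℝ (fun i ↦ C cov[Z, Y i; μ]) p) ∂μ := by
  have := Fintype.ofFinite ι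
  have := h.isProbabilityMeasure
  have eval_memLp (p : MvPolynomial ι ℝ) : MemLp (fun ω ↦ eval (Y · ω) p) 2 μ :=
    memLp_eval_of_hasGaussianLaw h.snd p 2
  have eval_measurable (p : MvPolynomial ι ℝ) : Measurable fun y : ℝ × (ι → ℝ) ↦ eval y.2 p :=
    (MvPolynomial.continuous_eval p).measurable.comp measurable_snd
  have centered_memLp : MemLp (fun ω ↦ Z ω - μ[Z]) 2 μ := h.fst.memLp_two.sub (memLp_const _)
  let D := mkDerivation ℝ fun i ↦ (C (regressionCoeff Z (Y i) μ) : MvPolynomial ι ℝ)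
  calc ∫ ω, (Z ω - μ[Z]) * eval (Y · ω) p ∂μ
      = ∫ ω', ∫ ω, (Z ω - μ[Z]) * eval (regressionResample Z Y μ ω ω') p ∂μ ∂μ :=
        integral_regression h (f := fun y ↦ (y.1 - μ[Z]) * eval y.2 p)
          ((measurable_fst.sub_const _).mul (eval_measurable p))
          (centered_memLp.integrable_mul (eval_memLp p))
    _ = ∫ ω', Var[Z; μ] * ∫ ω, eval (regressionResample Z Y μ ω ω') (D p) ∂μ ∂μ :=
        integral_congr_ae <| .of_forall fun ω' ↦ integral_sub_mul_eval_line h.fst _ _ p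
    _ = Var[Z; μ] * ∫ ω, eval (Y · ω) (D p) ∂μ := by
        rw [integral_const_mul, integral_regression h (eval_measurable (D p))
          ((eval_memLp _).integrable one_le_two)]
    _ = ∫ ω, eval (Y · ω) (mkDerivation ℝ (fun i ↦ C cov[Z, Y i; μ]) p) ∂μ := by
        simp only [← regressionCoeff_mul_variance h.fst.memLp_two, mul_comm _ Var[Z; μ],
          mkDerivation_C_mul, MvPolynomial.smul_eval, integral_const_mul, D]

end Stein

section Integrability

variable {s : ℝ}

lemma integrable_abs_rpow_mul_exp_neg_mul_sq {b : ℝ} (hb : 0 < b) (hs : -1 < s) :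
    Integrable fun x : ℝ ↦ |x| ^ s * Real.exp (-b * x ^ 2) := by
  have on_pos : IntegrableOn (fun x : ℝ ↦ |x| ^ s * Real.exp (-b * x ^ 2)) (Set.Ioi 0) :=
    (integrableOn_rpow_mul_exp_neg_mul_sq hb hs).congr_fun
      (fun x hx ↦ by simp only [abs_of_pos (Set.mem_Ioi.1 hx)]) measurableSet_Ioi
  have on_nonpos : IntegrableOn (fun x : ℝ ↦ |x| ^ s * Real.exp (-b * x ^ 2)) (Set.Iic 0) := by
    rw [integrableOn_Iic_iff_integrableOn_Iio]
    simpa using on_pos.comp_neg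
  rw [← integrableOn_univ, ← Set.Iic_union_Ioi (a := (0 : ℝ))]
  exact on_nonpos.union on_pos

lemma gaussianPDFReal_le_exp_neg_mul_sq (m : ℝ) (v : NNReal) (x : ℝ) :
    gaussianPDFReal m v x ≤ (√(2 * Real.pi * v))⁻¹ * Real.exp (m ^ 2 / (2 * v)) *
      Real.exp (-(4 * (v : ℝ))⁻¹ * x ^ 2) := by
  rcases eq_or_ne v 0 with rfl | hv
  · simp
  have hv' : (v : ℝ) ≠ 0 := mod_cast hv
  have complete_square : m ^ 2 / (2 * v) + -(4 * (v : ℝ))⁻¹ * x ^ 2 =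
      -(x - m) ^ 2 / (2 * v) + (x - 2 * m) ^ 2 / (4 * v) := by
    field_simp
    ring
  rw [gaussianPDFReal, mul_assoc (√(2 * Real.pi * v))⁻¹, ← Real.exp_add, complete_square]
  gcongr
  exact le_add_of_nonneg_right (by positivity)

lemma integrable_abs_rpow_gaussianReal {m : ℝ} {v : NNReal} (hv : v ≠ 0) (hs : -1 < s) :
    Integrable (fun x ↦ |x| ^ s) (gaussianReal m v) := by
  have rate_pos : 0 < (4 * (v : ℝ))⁻¹ :=
    inv_pos.2 (mul_pos four_pos (NNReal.coe_pos.2 (pos_iff_ne_zero.2 hv)))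
  rw [integrable_gaussianReal_iff hv]
  refine ((integrable_abs_rpow_mul_exp_neg_mul_sq rate_pos hs).const_mul
    ((√(2 * Real.pi * v))⁻¹ * Real.exp (m ^ 2 / (2 * v)))).mono' (by fun_prop)
    (.of_forall fun x ↦ ?_)
  rw [Real.norm_of_nonneg (mul_nonneg (gaussianPDFReal_nonneg m v x) (by positivity)),
    mul_left_comm, mul_comm (gaussianPDFReal m v x)]
  exact mul_le_mul_of_nonneg_left (gaussianPDFReal_le_exp_neg_mul_sq m v x) (by positivity)

variable {Ω ι : Type*} [MeasurableSpace Ω] {μ : Measure Ω} {Z : Ω → ℝ}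

lemma integrable_abs_rpow_of_hasGaussianLaw (h : HasGaussianLaw Z μ) (hZ : Var[Z; μ] ≠ 0)
    (hs : -1 < s) : Integrable (fun ω ↦ |Z ω| ^ s) μ := by
  have := h.isProbabilityMeasure
  have hv : Var[Z; μ].toNNReal ≠ 0 :=
    (Real.toNNReal_pos.2 ((variance_nonneg Z μ).lt_of_ne' hZ)).ne'
  have integrable_map := integrable_abs_rpow_gaussianReal (m := μ[Z]) hv hs
  rw [← h.map_eq_gaussianReal] at integrable_map
  exact integrable_map.comp_aemeasurable h.aemeasurable

lemma exists_one_lt_memLp_abs_rpow (h : HasGaussianLaw Z μ) (hZ : Var[Z; μ] ≠ 0) (hs : -1 < s) :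
    ∃ p : ℝ, 1 < p ∧ MemLp (fun ω ↦ |Z ω| ^ s) (ENNReal.ofReal p) μ := by
  have near_one : ∀ᶠ p in nhdsWithin (1 : ℝ) (Set.Ioi 1), -1 < s * p :=
    (continuous_const_mul s).continuousWithinAt.eventually_const_lt (by simpa using hs)
  obtain ⟨p, hsp, hp⟩ := (near_one.and self_mem_nhdsWithin).exists
  have hp₀ : 0 < p := one_pos.trans hp
  refine ⟨p, hp, (integrable_norm_rpow_iff ?_ (by simpa using hp₀) ENNReal.ofReal_ne_top).1 ?_⟩
  · exact (h.aemeasurable.norm.pow_const s).aestronglyMeasurable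
  · simpa [hp₀.le, Real.abs_rpow_of_nonneg, ← Real.rpow_mul] using
      integrable_abs_rpow_of_hasGaussianLaw h hZ hsp

lemma integrable_abs_rpow_mul_eval [Finite ι] {Y : ι → Ω → ℝ}
    (h : HasGaussianLaw (fun ω ↦ (Z ω, (Y · ω))) μ) (hZ : Var[Z; μ] ≠ 0) (hs : -1 < s)
    (p : MvPolynomial ι ℝ) :
    Integrable (fun ω ↦ |Z ω| ^ s * MvPolynomial.eval (Y · ω) p) μ := by
  have := Fintype.ofFinite ι
  obtain ⟨q, hq, rpow_memLp⟩ := exists_one_lt_memLp_abs_rpow h.fst hZ hs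
  have := (Real.HolderConjugate.conjExponent hq).ennrealOfReal
  have eval_memLp : MemLp (fun ω ↦ MvPolynomial.eval (Y · ω) p) (.ofReal q.conjExponent) μ :=
    memLp_eval_of_hasGaussianLaw h.snd p _
  exact rpow_memLp.integrable_mul eval_memLp

end Integrability

section ProductOfSquares

open MvPolynomial (C X eval mkDerivation)

variable {Ω ι : Type*} [MeasurableSpace Ω] {μ : Measure Ω} {Y : ι → Ω → ℝ}

/-- The expectation of a polynomial in the coordinates of a Gaussian vector `Y`, as a linear
functional of the polynomial. -/
noncomputable def polynomialExpectation (h : HasGaussianLaw (fun ω ↦ (Y · ω)) μ) :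
    MvPolynomial ι ℝ →ₗ[ℝ] ℝ where
  toFun p := ∫ ω, eval (Y · ω) p ∂μ
  map_add' p₁ p₂ := by
    have := h.isProbabilityMeasure
    have integrable_eval p := (memLp_eval_of_hasGaussianLaw h p 1).integrable le_rfl
    simp only [map_add, integral_add (integrable_eval p₁) (integrable_eval p₂)]
  map_smul' a p := by
    simp only [MvPolynomial.smul_eval, integral_const_mul, RingHom.id_apply, smul_eq_mul]

lemma polynomialExpectation_sub_mul [Finite ι] (h : HasGaussianLaw (fun ω ↦ (Y · ω)) μ)
    (j : ι) (p : MvPolynomial ι ℝ) :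
    polynomialExpectation h ((X j - C μ[Y j]) * p) =
      polynomialExpectation h (mkDerivation ℝ (fun i ↦ C cov[Y j, Y i; μ]) p) := by
  have := Fintype.ofFinite ι
  have pair : HasGaussianLaw (fun ω ↦ (Y j ω, (Y · ω))) μ :=
    h.map_fun ((ContinuousLinearMap.proj j).prod (ContinuousLinearMap.id ℝ (ι → ℝ)))
  simpa [polynomialExpectation] using integral_sub_mul_eval pair p

variable [Fintype ι]

theorem prod_variance_le_integral_prod_add_sq (h : HasGaussianLaw (fun ω ↦ (Y · ω)) μ)
    (c : ι → ℝ) : ∏ i, Var[Y i; μ] ≤ ∫ ω, ∏ i, (Y i ω + c i) ^ 2 ∂μ := by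
  have := h.isProbabilityMeasure
  have bound := prod_mul_stein_one_le_prod_add_sq (polynomialExpectation_sub_mul h)
    (fun p ↦ integral_nonneg fun ω ↦ by simpa using sq_nonneg (eval (Y · ω) p))
    (t := fun i j ↦ cov[Y i, Y j; μ]) (m := fun j ↦ C (c j + μ[Y j]))
    (fun i j ↦ by simp [MvPolynomial.algebraMap_eq])
    (fun j ↦ by simpa only [covariance_self (h.eval j).aemeasurable] using variance_nonneg _ _)
    (fun i j ↦ by simp) Finset.univ.toList
  simpa [Finset.prod_map_toList, polynomialExpectation, Finset.prod_pow, sub_add_add_cancel,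
    covariance_self (h.eval _).aemeasurable] using bound

theorem prod_variance_regressionResidual_mul_integral_le {Z : Ω → ℝ}
    (h : HasGaussianLaw (fun ω ↦ (Z ω, (Y · ω))) μ) {w : ℝ → ℝ} (hw : Measurable w)
    (hw₀ : ∀ x, 0 ≤ w x) (hint : Integrable (fun ω ↦ w (Z ω) * ∏ i, Y i ω ^ 2) μ) :
    (∏ i, Var[regressionResidual Z (Y i) μ; μ]) * ∫ ω, w (Z ω) ∂μ ≤
      ∫ ω, w (Z ω) * ∏ i, Y i ω ^ 2 ∂μ := by
  have := h.isProbabilityMeasure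
  have law : IdentDistrib (fun ω ↦ w (Z ω) * ∏ i, Y i ω ^ 2)
      (fun q : Ω × Ω ↦ w (Z q.1) * ∏ i, regressionResample Z Y μ q.1 q.2 i ^ 2) μ (μ.prod μ) :=
    (identDistrib_regression h).comp
      (u := fun y : ℝ × (ι → ℝ) ↦ w y.1 * ∏ i, y.2 i ^ 2) (by fun_prop)
  have product_bound (ω : Ω) : ∏ i, Var[regressionResidual Z (Y i) μ; μ] ≤
      ∫ ω', ∏ i, regressionResample Z Y μ ω ω' i ^ 2 ∂μ :=
    prod_variance_le_integral_prod_add_sq (hasGaussianLaw_regressionResidual h).snd _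
  calc (∏ i, Var[regressionResidual Z (Y i) μ; μ]) * ∫ ω, w (Z ω) ∂μ
      = ∫ ω, w (Z ω) * ∏ i, Var[regressionResidual Z (Y i) μ; μ] ∂μ := by
        rw [integral_mul_const, mul_comm]
    _ ≤ ∫ ω, ∫ ω', w (Z ω) * ∏ i, regressionResample Z Y μ ω ω' i ^ 2 ∂μ ∂μ := by
        refine integral_mono_of_nonneg (.of_forall fun ω ↦ ?_)
          (law.integrable_snd hint).integral_prod_left (.of_forall fun ω ↦ ?_)
        · exact mul_nonneg (hw₀ _) (Finset.prod_nonneg fun _ _ ↦ variance_nonneg _ _)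
        · simp only [integral_const_mul]
          exact mul_le_mul_of_nonneg_left (product_bound ω) (hw₀ _)
    _ = ∫ ω, w (Z ω) * ∏ i, Y i ω ^ 2 ∂μ := by
        rw [law.integral_eq, integral_prod _ (law.integrable_snd hint)]

theorem prod_variance_regressionResidual_mul_integral_abs_rpow_le {Z : Ω → ℝ}
    (h : HasGaussianLaw (fun ω ↦ (Z ω, (Y · ω))) μ) (hZ : Var[Z; μ] ≠ 0) {s : ℝ} (hs : -1 < s) :
    (∏ i, Var[regressionResidual Z (Y i) μ; μ]) * ∫ ω, |Z ω| ^ s ∂μ ≤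
      ∫ ω, |Z ω| ^ s * ∏ i, Y i ω ^ 2 ∂μ := by
  have integrable : Integrable (fun ω ↦ |Z ω| ^ s * ∏ i, Y i ω ^ 2) μ :=
    (integrable_abs_rpow_mul_eval h hZ hs (∏ i, X i ^ 2)).congr (.of_forall fun ω ↦ by simp)
  exact prod_variance_regressionResidual_mul_integral_le h (w := fun x ↦ |x| ^ s) (by fun_prop)
    (fun x ↦ by positivity) integrable

end ProductOfSquares

section CharacteristicFunction

open WithLp (toLp)

variable {Ω ι : Type*} [MeasurableSpace Ω] {μ : Measure Ω} [Fintype ι] {X : Ω → ι → ℝ}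
  {S : Matrix ι ι ℝ}

lemma posSemidef_of_integral_exp_eq [IsProbabilityMeasure μ] (hS : S.IsSymm)
    (hX : ∀ u : ι → ℝ, ∫ ω, Complex.exp (Complex.I * ((u ⬝ᵥ X ω : ℝ) : ℂ)) ∂μ =
      Complex.exp (-((u ⬝ᵥ S *ᵥ u : ℝ) : ℂ) / 2)) : S.PosSemidef := by
  refine posSemidef_iff_dotProduct_mulVec.2 ⟨hS, fun u ↦ ?_⟩
  have modulus_le_one : ‖Complex.exp (-((u ⬝ᵥ S *ᵥ u : ℝ) : ℂ) / 2)‖ ≤ 1 := by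
    rw [← hX u]
    simpa [Complex.norm_exp_I_mul_ofReal] using norm_integral_le_integral_norm (μ := μ)
      fun ω ↦ Complex.exp (Complex.I * ((u ⬝ᵥ X ω : ℝ) : ℂ))
  rw [Complex.norm_exp, Real.exp_le_one_iff, ← Complex.ofReal_neg, Complex.div_ofNat_re,
    Complex.ofReal_re] at modulus_le_one
  rw [star_trivial]
  linarith

variable [DecidableEq ι]

theorem hasLaw_multivariateGaussian_of_integral_exp_eq [IsProbabilityMeasure μ]
    (hXm : AEMeasurable X μ) (hS : S.PosSemidef)
    (hX : ∀ u : ι → ℝ, ∫ ω, Complex.exp (Complex.I * ((u ⬝ᵥ X ω : ℝ) : ℂ)) ∂μ =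
      Complex.exp (-((u ⬝ᵥ S *ᵥ u : ℝ) : ℂ) / 2)) :
    HasLaw (fun ω ↦ toLp 2 (X ω)) (multivariateGaussian 0 S) μ := by
  have toLp_aemeasurable : AEMeasurable (fun ω ↦ toLp 2 (X ω)) μ := by fun_prop
  have := Measure.isProbabilityMeasure_map toLp_aemeasurable
  refine ⟨toLp_aemeasurable, Measure.ext_of_charFun (funext fun u ↦ ?_)⟩
  rw [charFun_multivariateGaussian hS, charFun_apply,
    integral_map toLp_aemeasurable (by fun_prop)]
  simpa [PiLp.inner_apply, dotProduct, mul_comm, neg_div] using hX u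

variable {m : EuclideanSpace ℝ ι}

lemma hasGaussianLaw_of_hasLaw_multivariateGaussian
    (h : HasLaw (fun ω ↦ toLp 2 (X ω)) (multivariateGaussian m S) μ) : HasGaussianLaw X μ := by
  have gaussian : HasGaussianLaw (fun ω ↦ toLp 2 (X ω)) μ := ⟨h.map_eq ▸ inferInstance⟩
  exact gaussian.map_equiv (PiLp.continuousLinearEquiv 2 ℝ fun _ ↦ ℝ)

lemma integral_eval_of_hasLaw_multivariateGaussian
    (h : HasLaw (fun ω ↦ toLp 2 (X ω)) (multivariateGaussian m S) μ) (i : ι) :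
    ∫ ω, X ω i ∂μ = m i := by
  calc ∫ ω, X ω i ∂μ = ∫ x, x i ∂multivariateGaussian m S :=
        h.integral_comp (f := fun x ↦ x i) (by fun_prop)
    _ = m i := by
        rw [← eval_integral_piLp fun j ↦ IsGaussian.integrable_fun_id.eval_piLp j,
          integral_id_multivariateGaussian]

lemma covariance_eval_of_hasLaw_multivariateGaussian (hS : S.PosSemidef)
    (h : HasLaw (fun ω ↦ toLp 2 (X ω)) (multivariateGaussian m S) μ) (i j : ι) :
    cov[(X · i), (X · j); μ] = S i j := by
  rw [← covariance_eval_multivariateGaussian (μ := m) hS i j]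
  exact h.covariance_comp (f := fun x ↦ x i) (g := fun x ↦ x j) (by fun_prop) (by fun_prop)

end CharacteristicFunction

end GaussianProduct

open GaussianProduct ProbabilityTheory in
theorem gpi_neg_power_times_squares_general
    {Ω : Type*} [MeasurableSpace Ω] (μ : Measure Ω) [IsProbabilityMeasure μ]
    {n : ℕ} (X : Ω → (Fin (n + 1) → ℝ)) (hXm : Measurable X)
    (S : Matrix (Fin (n + 1)) (Fin (n + 1)) ℝ) (hS : S.IsSymm)
    (hGauss : ∀ u : Fin (n + 1) → ℝ,
      ∫ ω, Complex.exp (Complex.I * ((u ⬝ᵥ X ω : ℝ) : ℂ)) ∂μ =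
        Complex.exp (-(((u ⬝ᵥ S *ᵥ u : ℝ) : ℂ)) / 2))
    (hvar : ∀ i, 0 < S i i)
    {α₁ : ℝ} (hα₁ : α₁ < 1) :
    (∏ i : Fin n,
        (1 - (S 0 i.succ / (Real.sqrt (S 0 0) * Real.sqrt (S i.succ i.succ))) ^ 2)) *
      (∫ ω, |X ω 0| ^ (-α₁) ∂μ) * ∏ i : Fin n, ∫ ω, (X ω i.succ) ^ 2 ∂μ ≤
      ∫ ω, |X ω 0| ^ (-α₁) * ∏ i : Fin n, (X ω i.succ) ^ 2 ∂μ := by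
  have psd := posSemidef_of_integral_exp_eq hS hGauss
  have law := hasLaw_multivariateGaussian_of_integral_exp_eq hXm.aemeasurable psd hGauss
  have gaussian := hasGaussianLaw_of_hasLaw_multivariateGaussian law
  have cov_eq := covariance_eval_of_hasLaw_multivariateGaussian psd law
  have var_eq (i) : Var[(X · i); μ] = S i i := by
    rw [← covariance_self (gaussian.eval i).aemeasurable, cov_eq]
  have second_moment (i) : ∫ ω, X ω i ^ 2 ∂μ = S i i := by
    rw [← var_eq, variance_of_integral_eq_zero (gaussian.eval i).aemeasurable
      (integral_eval_of_hasLaw_multivariateGaussian law i)]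
  have pair : HasGaussianLaw (fun ω ↦ (X ω 0, fun i : Fin n ↦ X ω i.succ)) μ :=
    gaussian.map_fun ((ContinuousLinearMap.proj 0).prod (.pi fun i : Fin n ↦ .proj i.succ))
  have residual_variance (i : Fin n) :
      (1 - (S 0 i.succ / (√(S 0 0) * √(S i.succ i.succ))) ^ 2) * S i.succ i.succ =
        Var[regressionResidual (X · 0) (X · i.succ) μ; μ] := by
    simpa only [var_eq, cov_eq] using one_sub_correlation_sq_mul_variance
      (gaussian.eval 0).memLp_two (gaussian.eval i.succ).memLp_two
      ((var_eq i.succ).trans_ne (hvar i.succ).ne')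
  simp only [second_moment]
  rw [mul_right_comm, ← Finset.prod_mul_distrib]
  simp only [residual_variance]
  exact prod_variance_regressionResidual_mul_integral_abs_rpow_le pair
    ((var_eq 0).trans_ne (hvar 0).ne') (neg_lt_neg hα₁)

theorem gpi_neg_power_times_squares
    {Ω : Type*} [MeasurableSpace Ω] (μ : Measure Ω) [IsProbabilityMeasure μ]
    {n : ℕ} (X : Ω → (Fin (n + 1) → ℝ)) (hXm : Measurable X)
    (S : Matrix (Fin (n + 1)) (Fin (n + 1)) ℝ) (hS : S.IsSymm)
    (hGauss : ∀ u : Fin (n + 1) → ℝ,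
      ∫ ω, Complex.exp (Complex.I * ((u ⬝ᵥ X ω : ℝ) : ℂ)) ∂μ =
        Complex.exp (-(((u ⬝ᵥ S *ᵥ u : ℝ) : ℂ)) / 2))
    (hvar : ∀ i, 0 < S i i)
    {α₁ : ℝ} (hα₁ : α₁ ∈ Set.Ioo (0 : ℝ) 1) :
    (∏ i : Fin n,
        (1 - (S 0 i.succ / (Real.sqrt (S 0 0) * Real.sqrt (S i.succ i.succ))) ^ 2)) *
      (∫ ω, |X ω 0| ^ (-α₁) ∂μ) * ∏ i : Fin n, ∫ ω, (X ω i.succ) ^ 2 ∂μ ≤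
      ∫ ω, |X ω 0| ^ (-α₁) * ∏ i : Fin n, (X ω i.succ) ^ 2 ∂μ :=
  gpi_neg_power_times_squares_general μ X hXm S hS hGauss hvar hα₁.2
end

section
/- Let (X₁,X₂,X₃) be a centered Gaussian random vector in ℝ³ with nondegenerate components and correlation coefficients ρ_{12}, ρ_{13}. Then for every α₁ ∈ (0,1) and α₂,α₃ ∈ (0,∞), E[|X₁|^{-α₁}|X₂|^{α₂}|X₃|^{α₃}] ≤ C_{α₂,α₃} · E[|X₁|^{-α₁}] E[|X₂|^{α₂}] E[|X₃|^{α₃}], where C_{α₂,α₃} = Γ(1/2)Γ(1/2 + (α₂+α₃)/2) / (Γ(1/2+α₂/2) Γ(1/2+α₃/2)). -/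
open MeasureTheory Matrix
open ProbabilityTheory
open scoped ENNReal NNReal

/-!
Hölder's inequality for the measure `|U|^(-α) dμ` bounds `E[|U|^(-α) ∏ i, |V i|^(p i)]`
by a weighted geometric mean of the pair quantities `E[|U|^(-α) |V i|^s]`, where `s = ∑ i, p i`.

For a centered Gaussian pair, `V = b U + Y` with `Y` independent of `U`, and `|u|^(-α)` is a Gamma
mixture of the functions `exp (-t u² / 2)`. Tilting the law of `U` by such a function gives again a
centered Gaussian, of smaller variance, so it decreases the mean of `|b U + Y|^s`. Hence
`E[|U|^(-α) |V|^s] ≤ E[|U|^(-α)] E[|V|^s]`.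

The constant compares the `s`-th moments created by Hölder with the `p i`-th ones: for a standard
Gaussian `Z` it is `E|Z|^s / ∏ i, E|Z|^(p i)`.
-/

section

variable {Ω : Type*} [MeasurableSpace Ω] {μ : Measure Ω}

lemma abs_rpow_eq_toReal (x q : ℝ) : |x| ^ q = (‖x‖ₑ ^ q).toReal := by
  rw [← ENNReal.toReal_rpow, toReal_enorm, Real.norm_eq_abs]

lemma enorm_rpow_lt_top {x : ℝ} (hx : x ≠ 0) (q : ℝ) : ‖x‖ₑ ^ q < ∞ :=
  (ENNReal.rpow_ne_top_of_ne_zero (by simpa using hx) (by simp)).lt_top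

lemma rpow_sum_eq_prod_rpow {ι : Type*} (s : Finset ι) {p : ι → ℝ} (hp : ∀ i ∈ s, 0 ≤ p i)
    (x : ℝ≥0∞) : x ^ ∑ i ∈ s, p i = ∏ i ∈ s, x ^ p i := by
  induction s using Finset.cons_induction with
  | empty => simp
  | cons i s his ih =>
    rw [Finset.forall_mem_cons] at hp
    rw [Finset.sum_cons, Finset.prod_cons, ENNReal.rpow_add_of_nonneg _ _ hp.1
      (Finset.sum_nonneg hp.2), ih hp.2]

lemma lintegral_mul_prod_rpow_le {ι : Type*} [Fintype ι] {f : Ω → ℝ≥0∞} {g : ι → Ω → ℝ≥0∞}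
    (hf : AEMeasurable f μ) (hg : ∀ i, AEMeasurable (g i) μ) {p : ι → ℝ} (hp : ∀ i, 0 ≤ p i)
    (hs : 0 < ∑ i, p i) :
    ∫⁻ ω, f ω * ∏ i, g i ω ^ p i ∂μ ≤
      ∏ i, (∫⁻ ω, f ω * g i ω ^ ∑ j, p j ∂μ) ^ (p i / ∑ j, p j) := by
  set s := ∑ i, p i
  have hw (i : ι) : 0 ≤ p i / s := div_nonneg (hp i) hs.le
  have hw_sum : ∑ i, p i / s = 1 := by rw [← Finset.sum_div, div_self hs.ne']
  have hsplit (ω : Ω) : f ω * ∏ i, g i ω ^ p i = ∏ i, (f ω * g i ω ^ s) ^ (p i / s) := by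
    simp_rw [ENNReal.mul_rpow_of_nonneg _ _ (hw _), ← ENNReal.rpow_mul, mul_div_cancel₀ _ hs.ne']
    rw [Finset.prod_mul_distrib, ← rpow_sum_eq_prod_rpow _ (fun i _ ↦ hw i), hw_sum,
      ENNReal.rpow_one]
  simp_rw [hsplit]
  exact ENNReal.lintegral_prod_norm_pow_le _ (fun i _ ↦ hf.mul ((hg i).pow_const s)) hw_sum
    fun i _ ↦ hw i

lemma lintegral_rpow_mul_exp_neg_mul_Ioi {a r : ℝ} (ha : 0 < a) (hr : 0 < r) :
    ∫⁻ t in Set.Ioi (0 : ℝ), ENNReal.ofReal (t ^ (a - 1) * Real.exp (-(r * t))) =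
      ENNReal.ofReal ((1 / r) ^ a * Real.Gamma a) := by
  have hΓ : 0 < (1 / r) ^ a * Real.Gamma a :=
    mul_pos (by positivity) (Real.Gamma_pos_of_pos ha)
  rw [← Real.integral_rpow_mul_exp_neg_mul_Ioi ha hr] at hΓ ⊢
  refine (ofReal_integral_eq_lintegral_ofReal (Integrable.of_integral_ne_zero hΓ.ne') ?_).symm
  filter_upwards [ae_restrict_mem measurableSet_Ioi] with t ht
  have : 0 < t := ht
  positivity

lemma lintegral_rpow_mul_exp_neg_sq_Ioi {α u : ℝ} (hα : 0 < α) (hu : u ≠ 0) :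
    ∫⁻ t in Set.Ioi (0 : ℝ),
        ENNReal.ofReal (t ^ (α / 2 - 1)) * ENNReal.ofReal (Real.exp (-(t * u ^ 2 / 2))) =
      ENNReal.ofReal (2 ^ (α / 2) * Real.Gamma (α / 2)) * ‖u‖ₑ ^ (-α) := by
  have hpow : (1 / (u ^ 2 / 2)) ^ (α / 2) = 2 ^ (α / 2) * |u| ^ (-α) := by
    rw [one_div_div, Real.div_rpow zero_le_two (sq_nonneg u), ← sq_abs,
      ← Real.rpow_natCast_mul (abs_nonneg u), Real.rpow_neg (abs_nonneg u), div_eq_mul_inv,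
      Nat.cast_ofNat, mul_div_cancel₀ _ two_ne_zero]
  have habs : ENNReal.ofReal (|u| ^ (-α)) = ‖u‖ₑ ^ (-α) := by
    rw [abs_rpow_eq_toReal, ENNReal.ofReal_toReal (enorm_rpow_lt_top hu _).ne]
  calc
    _ = ∫⁻ t in Set.Ioi (0 : ℝ),
          ENNReal.ofReal (t ^ (α / 2 - 1) * Real.exp (-(u ^ 2 / 2 * t))) :=
      setLIntegral_congr_fun measurableSet_Ioi fun t ht ↦ by
        rw [← ENNReal.ofReal_mul (Real.rpow_nonneg (le_of_lt ht) _)]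
        ring_nf
    _ = ENNReal.ofReal (2 ^ (α / 2) * |u| ^ (-α) * Real.Gamma (α / 2)) := by
      rw [lintegral_rpow_mul_exp_neg_mul_Ioi (by positivity) (by positivity), hpow]
    _ = _ := by
      rw [mul_right_comm, ENNReal.ofReal_mul' (by positivity), habs]

lemma lintegral_enorm_rpow_neg_mul_eq_lintegral_exp {ν : Measure ℝ} [SFinite ν]
    (hν : ∀ᵐ u ∂ν, u ≠ 0) {α : ℝ} (hα : 0 < α) {f : ℝ → ℝ≥0∞} (hf : Measurable f) :
    ENNReal.ofReal (2 ^ (α / 2) * Real.Gamma (α / 2)) * ∫⁻ u, ‖u‖ₑ ^ (-α) * f u ∂ν =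
      ∫⁻ t in Set.Ioi (0 : ℝ), ENNReal.ofReal (t ^ (α / 2 - 1)) *
        ∫⁻ u, ENNReal.ofReal (Real.exp (-(t * u ^ 2 / 2))) * f u ∂ν := by
  have hpull (t : ℝ) : ENNReal.ofReal (t ^ (α / 2 - 1)) *
        ∫⁻ u, ENNReal.ofReal (Real.exp (-(t * u ^ 2 / 2))) * f u ∂ν =
      ∫⁻ u, ENNReal.ofReal (t ^ (α / 2 - 1)) *
        (ENNReal.ofReal (Real.exp (-(t * u ^ 2 / 2))) * f u) ∂ν :=
    (lintegral_const_mul _ (by fun_prop)).symm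
  simp_rw [hpull]
  rw [← lintegral_const_mul _ (by fun_prop), lintegral_lintegral_swap (by fun_prop)]
  refine lintegral_congr_ae (hν.mono fun u hu ↦ ?_)
  simp_rw [← mul_assoc]
  rw [lintegral_mul_const _ (by fun_prop), lintegral_rpow_mul_exp_neg_sq_Ioi hα hu]

lemma lintegral_enorm_rpow_neg_mul_le_of_forall_exp {ν : Measure ℝ} [SFinite ν]
    (hν : ∀ᵐ u ∂ν, u ≠ 0) {α : ℝ} (hα : 0 < α) {f : ℝ → ℝ≥0∞} (hf : Measurable f) {K : ℝ≥0∞}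
    (h : ∀ t : ℝ, 0 < t → ∫⁻ u, ENNReal.ofReal (Real.exp (-(t * u ^ 2 / 2))) * f u ∂ν ≤
      (∫⁻ u, ENNReal.ofReal (Real.exp (-(t * u ^ 2 / 2))) ∂ν) * K) :
    ∫⁻ u, ‖u‖ₑ ^ (-α) * f u ∂ν ≤ (∫⁻ u, ‖u‖ₑ ^ (-α) ∂ν) * K := by
  have hΓ : ENNReal.ofReal (2 ^ (α / 2) * Real.Gamma (α / 2)) ≠ 0 := by
    have := Real.Gamma_pos_of_pos (half_pos hα)
    exact (ENNReal.ofReal_pos.2 (by positivity)).ne'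
  rw [← ENNReal.mul_le_mul_iff_right hΓ ENNReal.ofReal_ne_top,
    ← lintegral_mul_const _ (by fun_prop), lintegral_enorm_rpow_neg_mul_eq_lintegral_exp hν hα hf,
    lintegral_enorm_rpow_neg_mul_eq_lintegral_exp hν hα measurable_const]
  refine setLIntegral_mono' measurableSet_Ioi fun t ht ↦ ?_
  rw [lintegral_mul_const _ (by fun_prop)]
  gcongr
  exact h t ht

/-- The absolute moment `E|Z|^q` of a standard Gaussian `Z`. It is `ℝ≥0∞`-valued, so that it is `∞`
rather than a junk `0` for `q ≤ -1`. -/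
noncomputable def stdGaussianAbsMoment (q : ℝ) : ℝ≥0∞ :=
  ∫⁻ x, ‖x‖ₑ ^ q ∂gaussianReal 0 1

lemma integral_abs_rpow_gaussianReal {q : ℝ} (hq : -1 < q) :
    ∫ x, |x| ^ q ∂gaussianReal 0 1 =
      2 ^ (q / 2) * Real.Gamma (1 / 2 + q / 2) / Real.Gamma (1 / 2) := by
  have hdensity (x : ℝ) : gaussianPDFReal 0 1 x • |x| ^ q =
      (fun y ↦ (√(2 * Real.pi))⁻¹ * (y ^ q * Real.exp (-(1 / 2) * y ^ (2 : ℝ)))) |x| := by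
    simp only [gaussianPDFReal, NNReal.coe_one, mul_one, sub_zero, smul_eq_mul, Real.rpow_ofNat,
      sq_abs]
    ring_nf
  have hpow : (1 / 2 : ℝ) ^ (-(q + 1) / 2) = 2 ^ (q / 2) * √2 := by
    rw [one_div, Real.inv_rpow (by norm_num), ← Real.rpow_neg (by norm_num), Real.sqrt_eq_rpow,
      ← Real.rpow_add (by norm_num)]
    congr 1
    ring
  simp_rw [integral_gaussianReal_eq_integral_smul one_ne_zero, hdensity]
  rw [integral_comp_abs
      (f := fun y : ℝ ↦ (√(2 * Real.pi))⁻¹ * (y ^ q * Real.exp (-(1 / 2) * y ^ (2 : ℝ)))),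
    integral_const_mul, integral_rpow_mul_exp_neg_mul_rpow (by norm_num) hq (by norm_num), hpow,
    Real.Gamma_one_half_eq, Real.sqrt_mul (by norm_num), show (q + 1) / 2 = 1 / 2 + q / 2 by ring]
  field_simp

lemma toReal_stdGaussianAbsMoment {q : ℝ} (hq : -1 < q) :
    (stdGaussianAbsMoment q).toReal =
      2 ^ (q / 2) * Real.Gamma (1 / 2 + q / 2) / Real.Gamma (1 / 2) := by
  have hne : ∀ᵐ x ∂gaussianReal 0 1, x ≠ 0 :=
    gaussianReal_absolutelyContinuous 0 one_ne_zero (Measure.ae_ne volume 0)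
  rw [← integral_abs_rpow_gaussianReal hq]
  simp_rw [abs_rpow_eq_toReal]
  exact (integral_toReal (by fun_prop) (hne.mono fun x hx ↦ enorm_rpow_lt_top hx q)).symm

lemma stdGaussianAbsMoment_lt_top {q : ℝ} (hq : -1 < q) : stdGaussianAbsMoment q < ∞ := by
  have := Real.Gamma_pos_of_pos (s := 1 / 2 + q / 2) (by linarith)
  have := Real.Gamma_pos_of_pos (s := 1 / 2) (by norm_num)
  refine (ENNReal.toReal_pos_iff.1 ?_).2
  rw [toReal_stdGaussianAbsMoment hq]
  positivity

lemma lintegral_enorm_rpow_gaussianReal (v : ℝ≥0) (q : ℝ) :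
    ∫⁻ x, ‖x‖ₑ ^ q ∂gaussianReal 0 v = (v : ℝ≥0∞) ^ (q / 2) * stdGaussianAbsMoment q := by
  have hscale : gaussianReal 0 v = (gaussianReal 0 1).map ((NNReal.sqrt v : ℝ) * ·) := by
    rw [gaussianReal_map_const_mul, mul_zero]
    congr 1
    ext
    simp
  have hsqrt : ‖(NNReal.sqrt v : ℝ)‖ₑ ^ q = (v : ℝ≥0∞) ^ (q / 2) := by
    rw [Real.enorm_of_nonneg (NNReal.coe_nonneg _), ENNReal.ofReal_coe_nnreal,
      NNReal.sqrt_eq_rpow, ENNReal.coe_rpow_of_nonneg _ (by norm_num), ← ENNReal.rpow_mul,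
      one_div_mul_eq_div]
  rw [hscale, lintegral_map (by fun_prop) (by fun_prop), stdGaussianAbsMoment,
    ← lintegral_const_mul _ (by fun_prop)]
  refine lintegral_congr fun x ↦ ?_
  rw [enorm_mul, ENNReal.mul_rpow_of_ne_top (by simp) (by simp), hsqrt]

lemma lintegral_enorm_rpow_of_hasGaussianLaw {V : Ω → ℝ} (hV : HasGaussianLaw V μ)
    (hV₀ : μ[V] = 0) (q : ℝ) :
    ∫⁻ ω, ‖V ω‖ₑ ^ q ∂μ = ENNReal.ofReal Var[V; μ] ^ (q / 2) * stdGaussianAbsMoment q := by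
  rw [ENNReal.ofReal, ← lintegral_enorm_rpow_gaussianReal, ← hV₀, ← hV.map_eq_gaussianReal,
    lintegral_map' (by fun_prop) hV.aemeasurable]

lemma lintegral_enorm_rpow_lt_top_of_hasGaussianLaw {U : Ω → ℝ} (hU : HasGaussianLaw U μ)
    (hU₀ : μ[U] = 0) (hvar : Var[U; μ] ≠ 0) {q : ℝ} (hq : -1 < q) :
    ∫⁻ ω, ‖U ω‖ₑ ^ q ∂μ < ∞ := by
  have hvar_ne : ENNReal.ofReal Var[U; μ] ≠ 0 :=
    (ENNReal.ofReal_pos.2 ((variance_nonneg U μ).lt_of_ne' hvar)).ne'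
  rw [lintegral_enorm_rpow_of_hasGaussianLaw hU hU₀]
  exact ENNReal.mul_lt_top (ENNReal.rpow_ne_top_of_ne_zero hvar_ne ENNReal.ofReal_ne_top).lt_top
    (stdGaussianAbsMoment_lt_top hq)

lemma integral_abs_rpow_of_hasGaussianLaw {V : Ω → ℝ} (hV : HasGaussianLaw V μ)
    (hV₀ : μ[V] = 0) {q : ℝ} (hq : 0 ≤ q) :
    ∫ ω, |V ω| ^ q ∂μ = Var[V; μ] ^ (q / 2) * (stdGaussianAbsMoment q).toReal := by
  simp_rw [abs_rpow_eq_toReal]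
  rw [integral_toReal (by fun_prop) (.of_forall fun ω ↦ by finiteness),
    lintegral_enorm_rpow_of_hasGaussianLaw hV hV₀, ENNReal.toReal_mul, ← ENNReal.toReal_rpow,
    ENNReal.toReal_ofReal (variance_nonneg V μ)]

lemma gaussianReal_withDensity_exp_neg_sq {v : ℝ≥0} (hv : v ≠ 0) (t : ℝ≥0) :
    (gaussianReal 0 v).withDensity (fun x ↦ ENNReal.ofReal (Real.exp (-(t * x ^ 2 / 2)))) =
      ENNReal.ofReal (√(1 + t * v))⁻¹ • gaussianReal 0 (v / (1 + t * v)) := by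
  have hdensity (x : ℝ) : gaussianPDFReal 0 v x * Real.exp (-(t * x ^ 2 / 2)) =
      (√(1 + t * v))⁻¹ * gaussianPDFReal 0 (v / (1 + t * v)) x := by
    have hnorm : (1 + (t : ℝ) * v) * (2 * Real.pi * (v / (1 + t * v))) = 2 * Real.pi * v := by
      field_simp
    simp only [gaussianPDFReal, NNReal.coe_div, NNReal.coe_add, NNReal.coe_one, NNReal.coe_mul]
    rw [mul_assoc, ← Real.exp_add, ← mul_assoc, ← mul_inv, ← Real.sqrt_mul (by positivity), hnorm]
    congr 2
    field_simp
    ring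
  rw [gaussianReal_of_var_ne_zero _ hv, gaussianReal_of_var_ne_zero _ (by positivity),
    ← withDensity_mul _ (by fun_prop) (by fun_prop), ← withDensity_smul _ (by fun_prop)]
  congr 1
  ext x
  simp only [Pi.mul_apply, Pi.smul_apply, smul_eq_mul, gaussianPDF]
  rw [← ENNReal.ofReal_mul (gaussianPDFReal_nonneg _ _ _), hdensity,
    ENNReal.ofReal_mul (by positivity)]

lemma map_const_mul_gaussianReal_conv_gaussianReal (b : ℝ) (v w : ℝ≥0) :
    ((gaussianReal 0 v).map (b * ·)) ∗ gaussianReal 0 w =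
      gaussianReal 0 (‖b‖₊ ^ 2 * v + w) := by
  rw [gaussianReal_map_const_mul, gaussianReal_conv_gaussianReal]
  congr 1
  · simp
  · ext; simp

lemma lintegral_lintegral_enorm_rpow_gaussianReal (b p : ℝ) (v w : ℝ≥0) :
    ∫⁻ u, ∫⁻ y, ‖b * u + y‖ₑ ^ p ∂gaussianReal 0 w ∂gaussianReal 0 v =
      ((‖b‖₊ ^ 2 * v + w : ℝ≥0) : ℝ≥0∞) ^ (p / 2) * stdGaussianAbsMoment p := by
  rw [← lintegral_enorm_rpow_gaussianReal, ← map_const_mul_gaussianReal_conv_gaussianReal,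
    Measure.lintegral_conv (by fun_prop), lintegral_map (by fun_prop) (by fun_prop)]

lemma lintegral_exp_neg_sq_mul_lintegral_enorm_rpow_le (b : ℝ) {p : ℝ} (hp : 0 ≤ p) {v : ℝ≥0}
    (hv : v ≠ 0) (w t : ℝ≥0) :
    ∫⁻ u, ENNReal.ofReal (Real.exp (-(t * u ^ 2 / 2))) *
        ∫⁻ y, ‖b * u + y‖ₑ ^ p ∂gaussianReal 0 w ∂gaussianReal 0 v ≤
      (∫⁻ u, ENNReal.ofReal (Real.exp (-(t * u ^ 2 / 2))) ∂gaussianReal 0 v) *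
        ∫⁻ u, ∫⁻ y, ‖b * u + y‖ₑ ^ p ∂gaussianReal 0 w ∂gaussianReal 0 v := by
  have htilt {f : ℝ → ℝ≥0∞} (hf : Measurable f) :
      ∫⁻ u, ENNReal.ofReal (Real.exp (-(t * u ^ 2 / 2))) * f u ∂gaussianReal 0 v =
        ENNReal.ofReal (√(1 + t * v))⁻¹ * ∫⁻ u, f u ∂gaussianReal 0 (v / (1 + t * v)) := by
    rw [← smul_eq_mul, ← lintegral_smul_measure, ← gaussianReal_withDensity_exp_neg_sq hv,
      lintegral_withDensity_eq_lintegral_mul _ (by fun_prop) hf]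
    rfl
  have hmass := htilt (f := 1) measurable_one
  simp only [Pi.one_apply, mul_one, lintegral_const, measure_univ] at hmass
  rw [htilt (by fun_prop), hmass, lintegral_lintegral_enorm_rpow_gaussianReal,
    lintegral_lintegral_enorm_rpow_gaussianReal]
  gcongr
  exact div_le_self zero_le le_self_add

lemma lintegral_enorm_rpow_neg_mul_lintegral_enorm_rpow_le (b : ℝ) {α p : ℝ} (hα : 0 < α)
    (hp : 0 ≤ p) {v : ℝ≥0} (hv : v ≠ 0) (w : ℝ≥0) :
    ∫⁻ u, ‖u‖ₑ ^ (-α) * ∫⁻ y, ‖b * u + y‖ₑ ^ p ∂gaussianReal 0 w ∂gaussianReal 0 v ≤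
      (∫⁻ u, ‖u‖ₑ ^ (-α) ∂gaussianReal 0 v) *
        ∫⁻ u, ∫⁻ y, ‖b * u + y‖ₑ ^ p ∂gaussianReal 0 w ∂gaussianReal 0 v := by
  have hne : ∀ᵐ u ∂gaussianReal 0 v, u ≠ 0 :=
    gaussianReal_absolutelyContinuous 0 hv (Measure.ae_ne volume 0)
  refine lintegral_enorm_rpow_neg_mul_le_of_forall_exp hne hα (by fun_prop) fun t ht ↦ ?_
  lift t to ℝ≥0 using ht.le
  exact lintegral_exp_neg_sq_mul_lintegral_enorm_rpow_le b hp hv w t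

lemma exists_indepFun_sub_const_mul {U V : Ω → ℝ}
    (hUV : HasGaussianLaw (fun ω ↦ (U ω, V ω)) μ) (hU : Var[U; μ] ≠ 0) :
    ∃ b : ℝ, IndepFun U (fun ω ↦ V ω - b * U ω) μ := by
  have := hUV.isProbabilityMeasure
  refine ⟨cov[U, V; μ] / Var[U; μ], HasGaussianLaw.indepFun_of_covariance_eq_zero ?_ ?_⟩
  · exact hUV.map_fun (.prod (.fst ℝ ℝ ℝ)
      (ContinuousLinearMap.snd ℝ ℝ ℝ -
        (cov[U, V; μ] / Var[U; μ]) • ContinuousLinearMap.fst ℝ ℝ ℝ))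
  · rw [covariance_fun_sub_right hUV.fst.memLp_two hUV.snd.memLp_two
      (hUV.fst.memLp_two.const_mul _), covariance_const_mul_right,
      covariance_self hUV.fst.aemeasurable, div_mul_cancel₀ _ hU, sub_self]

lemma exists_map_prodMk_eq_map_prod_gaussianReal {U V : Ω → ℝ}
    (hUV : HasGaussianLaw (fun ω ↦ (U ω, V ω)) μ) (hU₀ : μ[U] = 0) (hV₀ : μ[V] = 0)
    (hU : Var[U; μ] ≠ 0) :
    ∃ (b : ℝ) (w : ℝ≥0), μ.map (fun ω ↦ (U ω, V ω)) =
      ((gaussianReal 0 Var[U; μ].toNNReal).prod (gaussianReal 0 w)).map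
        (fun z ↦ (z.1, b * z.1 + z.2)) := by
  have := hUV.isProbabilityMeasure
  obtain ⟨b, hb⟩ := exists_indepFun_sub_const_mul hUV hU
  have hY : HasGaussianLaw (fun ω ↦ V ω - b * U ω) μ :=
    hUV.map_fun (ContinuousLinearMap.snd ℝ ℝ ℝ - b • ContinuousLinearMap.fst ℝ ℝ ℝ)
  have hY₀ : ∫ ω, (V ω - b * U ω) ∂μ = 0 := by
    rw [integral_sub hUV.snd.integrable (hUV.fst.integrable.const_mul b), integral_const_mul, hU₀,
      hV₀, mul_zero, sub_zero]
  have hlaw := (indepFun_iff_map_prod_eq_prod_map_map hUV.fst.aemeasurable hY.aemeasurable).1 hb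
  rw [hUV.fst.map_eq_gaussianReal, hY.map_eq_gaussianReal, hU₀, hY₀] at hlaw
  refine ⟨b, Var[fun ω ↦ V ω - b * U ω; μ].toNNReal, ?_⟩
  rw [← hlaw, AEMeasurable.map_map_of_aemeasurable (by fun_prop)
    (hUV.fst.aemeasurable.prodMk hY.aemeasurable)]
  simp [Function.comp_def]

lemma lintegral_enorm_rpow_neg_mul_enorm_rpow_le {U V : Ω → ℝ}
    (hUV : HasGaussianLaw (fun ω ↦ (U ω, V ω)) μ) (hU₀ : μ[U] = 0) (hV₀ : μ[V] = 0)
    (hU : Var[U; μ] ≠ 0) {α p : ℝ} (hα : 0 < α) (hp : 0 ≤ p) :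
    ∫⁻ ω, ‖U ω‖ₑ ^ (-α) * ‖V ω‖ₑ ^ p ∂μ ≤
      (∫⁻ ω, ‖U ω‖ₑ ^ (-α) ∂μ) * ∫⁻ ω, ‖V ω‖ₑ ^ p ∂μ := by
  obtain ⟨b, w, hlaw⟩ := exists_map_prodMk_eq_map_prod_gaussianReal hUV hU₀ hV₀ hU
  have htransfer {F : ℝ → ℝ → ℝ≥0∞} (hF : Measurable F.uncurry) :
      ∫⁻ ω, F (U ω) (V ω) ∂μ = ∫⁻ u, ∫⁻ y, F u (b * u + y) ∂gaussianReal 0 w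
        ∂gaussianReal 0 Var[U; μ].toNNReal := by
    calc
      _ = ∫⁻ z, F.uncurry z ∂μ.map (fun ω ↦ (U ω, V ω)) :=
        (lintegral_map' hF.aemeasurable hUV.aemeasurable).symm
      _ = _ := by
        rw [hlaw, lintegral_map hF (by fun_prop), lintegral_prod _ (by fun_prop)]
        rfl
  have hv : Var[U; μ].toNNReal ≠ 0 :=
    (Real.toNNReal_pos.2 ((variance_nonneg U μ).lt_of_ne' hU)).ne'
  rw [htransfer (F := fun u v ↦ ‖u‖ₑ ^ (-α) * ‖v‖ₑ ^ p) (by fun_prop),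
    htransfer (F := fun u _ ↦ ‖u‖ₑ ^ (-α)) (by fun_prop),
    htransfer (F := fun _ v ↦ ‖v‖ₑ ^ p) (by fun_prop)]
  have hpull (u : ℝ) : ∫⁻ y, ‖u‖ₑ ^ (-α) * ‖b * u + y‖ₑ ^ p ∂gaussianReal 0 w =
      ‖u‖ₑ ^ (-α) * ∫⁻ y, ‖b * u + y‖ₑ ^ p ∂gaussianReal 0 w :=
    lintegral_const_mul _ (by fun_prop)
  simp_rw [hpull, lintegral_const, measure_univ, mul_one]
  exact lintegral_enorm_rpow_neg_mul_lintegral_enorm_rpow_le b hα hp hv w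

lemma lintegral_enorm_rpow_neg_mul_prod_le {ι : Type*} [Fintype ι] {U : Ω → ℝ} {V : ι → Ω → ℝ}
    (hU : HasGaussianLaw U μ) (hUV : ∀ i, HasGaussianLaw (fun ω ↦ (U ω, V i ω)) μ)
    (hU₀ : μ[U] = 0) (hV₀ : ∀ i, μ[V i] = 0) (hvar : Var[U; μ] ≠ 0) {α : ℝ} (hα : 0 < α)
    {p : ι → ℝ} (hp : ∀ i, 0 ≤ p i) :
    ∫⁻ ω, ‖U ω‖ₑ ^ (-α) * ∏ i, ‖V i ω‖ₑ ^ p i ∂μ ≤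
      (∫⁻ ω, ‖U ω‖ₑ ^ (-α) ∂μ) *
        ((∏ i, ENNReal.ofReal Var[V i; μ] ^ (p i / 2)) * stdGaussianAbsMoment (∑ i, p i)) := by
  set s := ∑ i, p i
  obtain hs | hs : s = 0 ∨ 0 < s := (Finset.sum_nonneg fun i _ ↦ hp i).eq_or_lt'
  · have hp_zero (i : ι) : p i = 0 :=
      (Finset.sum_eq_zero_iff_of_nonneg fun i _ ↦ hp i).1 hs i (Finset.mem_univ i)
    simp [hs, hp_zero, stdGaussianAbsMoment]
  set A := ∫⁻ ω, ‖U ω‖ₑ ^ (-α) ∂μ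
  set M := stdGaussianAbsMoment s
  have hw (i : ι) : 0 ≤ p i / s := div_nonneg (hp i) hs.le
  have hpair (i : ι) : ∫⁻ ω, ‖U ω‖ₑ ^ (-α) * ‖V i ω‖ₑ ^ s ∂μ ≤
      A * (ENNReal.ofReal Var[V i; μ] ^ (s / 2) * M) := by
    rw [← lintegral_enorm_rpow_of_hasGaussianLaw (hUV i).snd (hV₀ i)]
    exact lintegral_enorm_rpow_neg_mul_enorm_rpow_le (hUV i) hU₀ (hV₀ i) hvar hα hs.le
  have hweights (x : ℝ≥0∞) : ∏ i, x ^ (p i / s) = x := by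
    rw [← rpow_sum_eq_prod_rpow _ (fun i _ ↦ hw i), ← Finset.sum_div, div_self hs.ne',
      ENNReal.rpow_one]
  calc
    _ ≤ ∏ i, (∫⁻ ω, ‖U ω‖ₑ ^ (-α) * ‖V i ω‖ₑ ^ s ∂μ) ^ (p i / s) :=
      lintegral_mul_prod_rpow_le (hU.aemeasurable.enorm.pow_const _)
        (fun i ↦ (hUV i).snd.aemeasurable.enorm) hp hs
    _ ≤ ∏ i, (A * (ENNReal.ofReal Var[V i; μ] ^ (s / 2) * M)) ^ (p i / s) :=
      Finset.prod_le_prod' fun i _ ↦ ENNReal.rpow_le_rpow (hpair i) (hw i)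
    _ = _ := by
      have hexp (i : ι) : s / 2 * (p i / s) = p i / 2 := by field_simp
      simp_rw [ENNReal.mul_rpow_of_nonneg _ _ (hw _), Finset.prod_mul_distrib, hweights,
        ← ENNReal.rpow_mul, hexp]

lemma integral_abs_rpow_neg_mul_prod_le {ι : Type*} [Fintype ι] {U : Ω → ℝ} {V : ι → Ω → ℝ}
    (hU : HasGaussianLaw U μ) (hUV : ∀ i, HasGaussianLaw (fun ω ↦ (U ω, V i ω)) μ)
    (hU₀ : μ[U] = 0) (hV₀ : ∀ i, μ[V i] = 0) (hvar : Var[U; μ] ≠ 0) {α : ℝ}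
    (hα : α ∈ Set.Ioo (0 : ℝ) 1) {p : ι → ℝ} (hp : ∀ i, 0 ≤ p i) :
    ∫ ω, |U ω| ^ (-α) * ∏ i, |V i ω| ^ p i ∂μ ≤
      (∫ ω, |U ω| ^ (-α) ∂μ) *
        ((∏ i, Var[V i; μ] ^ (p i / 2)) * (stdGaussianAbsMoment (∑ i, p i)).toReal) := by
  have hU_lt_top : ∫⁻ ω, ‖U ω‖ₑ ^ (-α) ∂μ < ∞ :=
    lintegral_enorm_rpow_lt_top_of_hasGaussianLaw hU hU₀ hvar (neg_lt_neg hα.2)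
  have hmoment_lt_top : stdGaussianAbsMoment (∑ i, p i) < ∞ :=
    stdGaussianAbsMoment_lt_top (neg_one_lt_zero.trans_le (Finset.sum_nonneg fun i _ ↦ hp i))
  have hvar_lt_top : ∏ i, ENNReal.ofReal Var[V i; μ] ^ (p i / 2) < ∞ :=
    ENNReal.prod_lt_top fun i _ ↦
      ENNReal.rpow_lt_top_of_nonneg (by linarith [hp i]) ENNReal.ofReal_ne_top
  have hle := lintegral_enorm_rpow_neg_mul_prod_le hU hUV hU₀ hV₀ hvar hα.1 hp
  have hbound_lt_top :=
    ENNReal.mul_lt_top hU_lt_top (ENNReal.mul_lt_top hvar_lt_top hmoment_lt_top)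
  have hU_meas : AEMeasurable (fun ω ↦ ‖U ω‖ₑ ^ (-α)) μ := hU.aemeasurable.enorm.pow_const _
  have hprod_meas : AEMeasurable (fun ω ↦ ‖U ω‖ₑ ^ (-α) * ∏ i, ‖V i ω‖ₑ ^ p i) μ :=
    hU_meas.mul (Finset.aemeasurable_fun_prod _ fun i _ ↦
      (hUV i).snd.aemeasurable.enorm.pow_const _)
  have hle_toReal := ENNReal.toReal_mono hbound_lt_top.ne hle
  rw [← integral_toReal hprod_meas (ae_lt_top' hprod_meas (hle.trans_lt hbound_lt_top).ne),
    ENNReal.toReal_mul, ← integral_toReal hU_meas (ae_lt_top' hU_meas hU_lt_top.ne)] at hle_toReal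
  simpa only [ENNReal.toReal_mul, ENNReal.toReal_prod, ← ENNReal.toReal_rpow, toReal_enorm,
    Real.norm_eq_abs, ENNReal.toReal_ofReal (variance_nonneg _ _)] using hle_toReal

lemma integral_abs_rpow_neg_mul_prod_le_gamma_mul {ι : Type*} [Fintype ι] {U : Ω → ℝ}
    {V : ι → Ω → ℝ}
    (hU : HasGaussianLaw U μ) (hUV : ∀ i, HasGaussianLaw (fun ω ↦ (U ω, V i ω)) μ)
    (hU₀ : μ[U] = 0) (hV₀ : ∀ i, μ[V i] = 0) (hvar : Var[U; μ] ≠ 0) {α : ℝ}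
    (hα : α ∈ Set.Ioo (0 : ℝ) 1) {p : ι → ℝ} (hp : ∀ i, 0 ≤ p i) :
    ∫ ω, |U ω| ^ (-α) * ∏ i, |V i ω| ^ p i ∂μ ≤
      (Real.Gamma (1 / 2 + (∑ i, p i) / 2) / Real.Gamma (1 / 2) *
          ∏ i, Real.Gamma (1 / 2) / Real.Gamma (1 / 2 + p i / 2)) *
        ((∫ ω, |U ω| ^ (-α) ∂μ) * ∏ i, ∫ ω, |V i ω| ^ p i ∂μ) := by
  have hV_moment (i : ι) : Real.Gamma (1 / 2) / Real.Gamma (1 / 2 + p i / 2) *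
      ∫ ω, |V i ω| ^ p i ∂μ = Var[V i; μ] ^ (p i / 2) * 2 ^ (p i / 2) := by
    have hΓ_half : Real.Gamma (1 / 2) ≠ 0 := (Real.Gamma_pos_of_pos (by norm_num)).ne'
    have hΓ : Real.Gamma (1 / 2 + p i / 2) ≠ 0 :=
      (Real.Gamma_pos_of_pos (by linarith [hp i])).ne'
    rw [integral_abs_rpow_of_hasGaussianLaw (hUV i).snd (hV₀ i) (hp i),
      toReal_stdGaussianAbsMoment (neg_one_lt_zero.trans_le (hp i))]
    generalize Real.Gamma (1 / 2 + p i / 2) = G at hΓ ⊢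
    field_simp
  refine (integral_abs_rpow_neg_mul_prod_le hU hUV hU₀ hV₀ hvar hα hp).trans_eq ?_
  rw [mul_mul_mul_comm, ← Finset.prod_mul_distrib, Finset.prod_congr rfl fun i _ ↦ hV_moment i,
    Finset.prod_mul_distrib, ← Real.rpow_sum_of_pos two_pos, ← Finset.sum_div,
    toReal_stdGaussianAbsMoment (neg_one_lt_zero.trans_le (Finset.sum_nonneg fun i _ ↦ hp i))]
  ring

lemma eq_gaussianReal_of_charFun_eq_exp {ν : Measure ℝ} [IsProbabilityMeasure ν] {v : ℝ}
    (h : ∀ t, charFun ν t = Complex.exp (-(v * t ^ 2) / 2)) :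
    ν = gaussianReal 0 v.toNNReal := by
  have hv : 0 ≤ v := by
    have hnorm := norm_charFun_le_one (μ := ν) 1
    rw [h, Complex.norm_exp, Real.exp_le_one_iff] at hnorm
    have : (-((v : ℂ) * (1 : ℝ) ^ 2) / 2).re = -v / 2 := by simp
    linarith
  refine Measure.ext_of_charFun (funext fun t ↦ ?_)
  rw [h, charFun_gaussianReal, Real.coe_toNNReal v hv]
  ring_nf
  simp

lemma hasLaw_dotProduct_of_integral_exp_eq {ι : Type*} [Fintype ι] [IsProbabilityMeasure μ]
    {X : Ω → ι → ℝ} (hX : Measurable X) {S : Matrix ι ι ℝ}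
    (h : ∀ u : ι → ℝ, ∫ ω, Complex.exp (Complex.I * ((u ⬝ᵥ X ω : ℝ) : ℂ)) ∂μ =
      Complex.exp (-((u ⬝ᵥ S *ᵥ u : ℝ) : ℂ) / 2)) (u : ι → ℝ) :
    HasLaw (fun ω ↦ u ⬝ᵥ X ω) (gaussianReal 0 (u ⬝ᵥ S *ᵥ u).toNNReal) μ := by
  have hu : AEMeasurable (fun ω ↦ u ⬝ᵥ X ω) μ := by
    unfold dotProduct
    fun_prop
  have := Measure.isProbabilityMeasure_map hu
  refine ⟨hu, eq_gaussianReal_of_charFun_eq_exp fun t ↦ ?_⟩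
  have ht := h (t • u)
  simp only [smul_dotProduct, mulVec_smul, dotProduct_smul, smul_eq_mul] at ht
  rw [charFun_apply_real, integral_map hu (by fun_prop)]
  convert ht using 3
  · push_cast
    ring_nf
  · push_cast
    ring_nf

lemma hasGaussianLaw_of_forall_dotProduct {ι : Type*} [Fintype ι] {X : Ω → ι → ℝ}
    (hX : Measurable X) (h : ∀ u : ι → ℝ, HasGaussianLaw (fun ω ↦ u ⬝ᵥ X ω) μ) :
    HasGaussianLaw X μ := by
  classical
  refine ⟨isGaussian_of_isGaussian_map fun L ↦ ?_⟩
  obtain ⟨u, hu⟩ := (dotProductEquiv ℝ ι).surjective L.toLinearMap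
  have hL : (fun ω ↦ u ⬝ᵥ X ω) = L ∘ X := funext fun ω ↦ LinearMap.congr_fun hu (X ω)
  rw [Measure.map_map (by fun_prop) hX, ← hL]
  exact (h u).isGaussian_map

theorem gpi_dim_three_upper_bound_general [IsProbabilityMeasure μ] {n : ℕ}
    {X : Ω → Fin (n + 1) → ℝ} (hX : Measurable X) {S : Matrix (Fin (n + 1)) (Fin (n + 1)) ℝ}
    (hGauss : ∀ u : Fin (n + 1) → ℝ,
      ∫ ω, Complex.exp (Complex.I * ((u ⬝ᵥ X ω : ℝ) : ℂ)) ∂μ =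
        Complex.exp (-((u ⬝ᵥ S *ᵥ u : ℝ) : ℂ) / 2))
    (hvar : 0 < S 0 0) {α : ℝ} (hα : α ∈ Set.Ioo (0 : ℝ) 1) {p : Fin n → ℝ} (hp : ∀ i, 0 ≤ p i) :
    ∫ ω, |X ω 0| ^ (-α) * ∏ i : Fin n, |X ω i.succ| ^ p i ∂μ ≤
      (Real.Gamma (1 / 2 + (∑ i, p i) / 2) / Real.Gamma (1 / 2) *
          ∏ i, Real.Gamma (1 / 2) / Real.Gamma (1 / 2 + p i / 2)) *
        ((∫ ω, |X ω 0| ^ (-α) ∂μ) * ∏ i : Fin n, ∫ ω, |X ω i.succ| ^ p i ∂μ) := by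
  have hdot := hasLaw_dotProduct_of_integral_exp_eq hX hGauss
  have hgauss : HasGaussianLaw X μ :=
    hasGaussianLaw_of_forall_dotProduct hX fun u ↦ (hdot u).hasGaussianLaw
  have hlaw (i : Fin (n + 1)) : HasLaw (fun ω ↦ X ω i) (gaussianReal 0 (S i i).toNNReal) μ := by
    simpa using hdot (Pi.single i 1)
  have hmean (i : Fin (n + 1)) : ∫ ω, X ω i ∂μ = 0 := by
    rw [(hlaw i).integral_eq, integral_id_gaussianReal]
  have hvar_ne : Var[fun ω ↦ X ω 0; μ] ≠ 0 := by
    simpa [(hlaw 0).variance_eq] using hvar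
  exact integral_abs_rpow_neg_mul_prod_le_gamma_mul (hgauss.eval 0)
    (fun i ↦ hgauss.prodMk 0 i.succ) (hmean 0) (fun i ↦ hmean i.succ) hvar_ne hα hp

end

theorem gpi_dim_three_upper_bound
    {Ω : Type*} [MeasurableSpace Ω] (μ : Measure Ω) [IsProbabilityMeasure μ]
    (X : Ω → (Fin 3 → ℝ)) (hXm : Measurable X)
    (S : Matrix (Fin 3) (Fin 3) ℝ) (hS : S.IsSymm)
    (hGauss : ∀ u : Fin 3 → ℝ,
      ∫ ω, Complex.exp (Complex.I * ((u ⬝ᵥ X ω : ℝ) : ℂ)) ∂μ =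
        Complex.exp (-(((u ⬝ᵥ S *ᵥ u : ℝ) : ℂ)) / 2))
    (hvar : ∀ i, 0 < S i i)
    {α₁ α₂ α₃ : ℝ} (hα₁ : α₁ ∈ Set.Ioo (0 : ℝ) 1) (hα₂ : 0 < α₂) (hα₃ : 0 < α₃) :
    ∫ ω, |X ω 0| ^ (-α₁) * |X ω 1| ^ α₂ * |X ω 2| ^ α₃ ∂μ ≤
      (Real.Gamma (1 / 2) * Real.Gamma (1 / 2 + (α₂ + α₃) / 2) /
          (Real.Gamma (1 / 2 + α₂ / 2) * Real.Gamma (1 / 2 + α₃ / 2))) *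
        ((∫ ω, |X ω 0| ^ (-α₁) ∂μ) * (∫ ω, |X ω 1| ^ α₂ ∂μ) *
          ∫ ω, |X ω 2| ^ α₃ ∂μ) := by
  have hΓ : Real.Gamma (1 / 2) ≠ 0 := (Real.Gamma_pos_of_pos one_half_pos).ne'
  convert gpi_dim_three_upper_bound_general hXm hGauss (hvar 0) hα₁ (p := ![α₂, α₃])
    (Fin.forall_fin_two.2 ⟨hα₂.le, hα₃.le⟩) using 1
  · simp [mul_assoc]
  · simp only [Fin.prod_univ_two, Fin.sum_univ_two, cons_val_zero, cons_val_one,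
      Fin.succ_zero_eq_one, Fin.succ_one_eq_two]
    field_simp
end
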